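/- arXiv:1301.4937 — 3 statements merged into one kernel-verified Lean document; each statement's English description precedes it below -/
import Mathlib

section
/- Let m ≥ 1 and 1 ≤ j ≤ m, and define integers b_1,…,b_m by b_j = 0 and b_i = 1 for all i ≠ j. Then every coefficient of the Euler continuant polynomial D_m(b_1,…,b_m) is greater than or equal to the corresponding coefficient of the Fibonacci polynomial f_{m−1}; in particular, the coefficient of z^{m−2k} in D_m(b_1,…,b_m) is at least C(m−1−k, k−1) for every 1 ≤ k ≤ ⌊m/2⌋. -/
open Polynomial

/-- The Fibonacci polynomials: `f 0 = 0`, `f 1 = 1`, `f (n+2) = X * f (n+1) + f n`. -/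
noncomputable def fibP : ℕ → Polynomial ℤ
  | 0 => 0
  | 1 => 1
  | n + 2 => X * fibP (n + 1) + fibP n

/-- The extended Euler continuant polynomials: `D b 0 = 1`, `D b 1 = b₁ z`,
`D b k = bₖ z ⬝ D b (k-1) + D b (k-2)` (with the convention `D b (-1) = 0`). -/
noncomputable def contD (b : ℕ → ℤ) : ℕ → Polynomial ℤ
  | 0 => 1
  | 1 => C (b 1) * X
  | k + 2 => C (b (k + 2)) * X * contD b (k + 1) + contD b k

/-!
With a single vanishing entry `bⱼ`, the continuant exceeds `f_{m-1}` by exactly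
`z * f_{j-1} * f_{m-j}`: as functions of `m ≥ j`, both `D_m` and `f_{m-1} + z * f_{j-1} * f_{m-j}`
satisfy the Fibonacci recurrence, and they agree at `m = j` and `m = j + 1`. Fibonacci polynomials
come from polynomials over `ℕ`, so the excess has nonnegative coefficients.
-/

theorem fibP_add_two (n : ℕ) : fibP (n + 2) = X * fibP (n + 1) + fibP n := by
  rw [fibP]

theorem contD_add_two (b : ℕ → ℤ) (k : ℕ) :
    contD b (k + 2) = C (b (k + 2)) * X * contD b (k + 1) + contD b k := by
  rw [contD]

theorem fibP_mem_lifts : ∀ n, fibP n ∈ lifts (Nat.castRingHom ℤ)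
  | 0 => zero_mem _
  | 1 => one_mem _
  | n + 2 => by
    rw [fibP_add_two]
    exact add_mem (mul_mem (X_mem_lifts _) (fibP_mem_lifts (n + 1))) (fibP_mem_lifts n)

theorem coeff_nonneg_of_mem_lifts_natCast {R : Type*} [Semiring R] [PartialOrder R]
    [IsOrderedRing R] {p : R[X]} (hp : p ∈ lifts (Nat.castRingHom R)) (n : ℕ) : 0 ≤ p.coeff n := by
  obtain ⟨a, ha⟩ := (lifts_iff_coeff_lifts p).mp hp n
  exact ha ▸ a.cast_nonneg

theorem degree_fibP_lt : ∀ n : ℕ, (fibP n).degree < n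
  | 0 => by simp [fibP]
  | 1 => by simp [fibP]
  | n + 2 => by
    have hX : degree (X * fibP (n + 1)) < (n + 2 : ℕ) := by
      rw [X_mul, degree_mul_X]
      exact WithBot.add_lt_add_right WithBot.one_ne_bot (degree_fibP_lt (n + 1))
    have hn : degree (fibP n) < (n + 2 : ℕ) :=
      (degree_fibP_lt n).trans (by exact_mod_cast Nat.lt_add_of_pos_right two_pos)
    rw [fibP_add_two]
    exact (degree_add_le _ _).trans_lt (max_lt hX hn)

theorem coeff_fibP_add_two_mul_add_one :
    ∀ n i : ℕ, (fibP (n + 2 * i + 1)).coeff n = (n + i).choose i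
  | 0, 0 => by simp [fibP]
  | 0, i + 1 => by
    have ih : (fibP (0 + 2 * i + 1)).coeff 0 = (0 + i).choose i :=
      coeff_fibP_add_two_mul_add_one 0 i
    rw [show 0 + 2 * (i + 1) + 1 = 0 + 2 * i + 1 + 2 by ring, fibP_add_two, coeff_add, ih]
    simp
  | n + 1, 0 => by
    have hn : (fibP n).coeff (n + 1) = 0 :=
      coeff_eq_zero_of_degree_lt ((degree_fibP_lt n).trans (by exact_mod_cast n.lt_succ_self))
    have ih : (fibP (n + 1)).coeff n = 1 := by simpa using coeff_fibP_add_two_mul_add_one n 0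
    simp [fibP_add_two, hn, ih]
  | n + 1, i + 1 => by
    have ih : (fibP (n + 2 * i + 2)).coeff (n + 1) = (n + i + 1).choose i := by
      convert coeff_fibP_add_two_mul_add_one (n + 1) i using 3 <;> ring
    have ih' : (fibP (n + 2 * i + 3)).coeff n = (n + i + 1).choose (i + 1) :=
      coeff_fibP_add_two_mul_add_one n (i + 1)
    calc (fibP (n + 1 + 2 * (i + 1) + 1)).coeff (n + 1)
        = (X * fibP (n + 2 * i + 3) + fibP (n + 2 * i + 2)).coeff (n + 1) := by
          rw [← fibP_add_two]; congr 2; ring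
      _ = (n + i + 1).choose (i + 1) + (n + i + 1).choose i := by
          rw [coeff_add, coeff_X_mul, ih, ih']
      _ = (n + 1 + (i + 1)).choose (i + 1) := by
          rw [show n + 1 + (i + 1) = n + i + 1 + 1 by ring,
            Nat.choose_succ_succ' (n + i + 1) i, Nat.cast_add, add_comm]

theorem contD_eq_fibP_of_forall_eq_one {b : ℕ → ℤ} :
    ∀ {n : ℕ}, (∀ i ∈ Set.Icc 1 n, b i = 1) → contD b n = fibP (n + 1)
  | 0, _ => by simp [contD, fibP]
  | 1, hb => by simp [contD, fibP, hb]
  | n + 2, hb => by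
    have hb' {k : ℕ} (hk : k ≤ n + 2) : ∀ i ∈ Set.Icc 1 k, b i = 1 :=
      fun i hi => hb i (Set.Icc_subset_Icc_right hk hi)
    rw [contD_add_two, hb (n + 2) (by simp), contD_eq_fibP_of_forall_eq_one (hb' (by omega)),
      contD_eq_fibP_of_forall_eq_one (hb' (by omega)), fibP_add_two (n + 1), C_1, one_mul]

section SingleZero

variable {b : ℕ → ℤ} {j : ℕ}

theorem contD_succ_eq_fibP (hzero : b (j + 1) = 0) (hone : ∀ i ∈ Set.Ico 1 j, b i = 1) :
    contD b (j + 1) = fibP j := by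
  cases j with
  | zero => simp [contD, fibP, hzero]
  | succ j =>
    have hj : contD b j = fibP (j + 1) :=
      contD_eq_fibP_of_forall_eq_one fun i hi => hone i ⟨hi.1, Nat.lt_succ_of_le hi.2⟩
    simp [contD_add_two, hzero, hj]

theorem contD_eq_fibP_add_X_mul (hzero : b (j + 1) = 0) :
    ∀ {d : ℕ}, (∀ i ∈ Set.Icc 1 (j + d + 1), i ≠ j + 1 → b i = 1) →
      contD b (j + d + 1) = fibP (j + d) + X * fibP j * fibP d
  | 0, hone => by
    have hj : contD b (j + 1) = fibP j :=
      contD_succ_eq_fibP hzero fun i hi => hone i (by grind) (by grind)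
    simp [hj, fibP]
  | 1, hone => by
    have hj : contD b (j + 1) = fibP j :=
      contD_succ_eq_fibP hzero fun i hi => hone i (by grind) (by grind)
    have hj' : contD b j = fibP (j + 1) :=
      contD_eq_fibP_of_forall_eq_one fun i hi => hone i (by grind) (by grind)
    rw [contD_add_two, hone (j + 2) (by simp) (by simp), hj, hj', fibP, C_1]
    ring
  | d + 2, hone => by
    have ih : contD b (j + d + 1) = fibP (j + d) + X * fibP j * fibP d :=
      contD_eq_fibP_add_X_mul hzero fun i hi => hone i (by grind)
    have ih' : contD b (j + d + 2) = fibP (j + d + 1) + X * fibP j * fibP (d + 1) :=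
      contD_eq_fibP_add_X_mul hzero (d := d + 1) fun i hi => hone i (by grind)
    have hlast : b (j + d + 3) = 1 := hone _ (by grind) (by grind)
    calc contD b (j + d + 3)
        = X * contD b (j + d + 2) + contD b (j + d + 1) := by
          rw [contD_add_two, hlast, C_1, one_mul]
      _ = (X * fibP (j + d + 1) + fibP (j + d)) +
            X * fibP j * (X * fibP (d + 1) + fibP d) := by rw [ih, ih']; ring
      _ = fibP (j + d + 2) + X * fibP j * fibP (d + 2) := by rw [← fibP_add_two, ← fibP_add_two]

theorem coeff_fibP_le_coeff_contD {d : ℕ} (hzero : b (j + 1) = 0)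
    (hone : ∀ i ∈ Set.Icc 1 (j + d + 1), i ≠ j + 1 → b i = 1) (n : ℕ) :
    (fibP (j + d)).coeff n ≤ (contD b (j + d + 1)).coeff n := by
  have hexcess : X * fibP j * fibP d ∈ lifts (Nat.castRingHom ℤ) :=
    mul_mem (mul_mem (X_mem_lifts _) (fibP_mem_lifts j)) (fibP_mem_lifts d)
  rw [contD_eq_fibP_add_X_mul hzero hone, coeff_add]
  exact le_add_of_nonneg_right (coeff_nonneg_of_mem_lifts_natCast hexcess n)

end SingleZero

/-- If `bⱼ = 0` and `bᵢ = 1` for `i ≠ j` (with `1 ≤ j ≤ m`), then every coefficient of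
`D_m(b₁,…,b_m)` is at least the corresponding coefficient of `f_{m-1}`; in particular the
coefficient of `z^{m-2k}` is at least `C(m-1-k, k-1)` for `1 ≤ k ≤ ⌊m/2⌋`. -/
theorem contD_coeff_ge_fibP (m j : ℕ) (hm : 1 ≤ m) (hj1 : 1 ≤ j) (hj2 : j ≤ m)
    (b : ℕ → ℤ) (hb : ∀ i, b i = if i = j then 0 else 1) :
    (∀ n, (fibP (m - 1)).coeff n ≤ (contD b m).coeff n) ∧
    (∀ k, 1 ≤ k → k ≤ m / 2 →
      ((m - 1 - k).choose (k - 1) : ℤ) ≤ (contD b m).coeff (m - 2 * k)) := by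
  have hcoeff : ∀ n, (fibP (m - 1)).coeff n ≤ (contD b m).coeff n := by
    obtain ⟨j, rfl⟩ := Nat.exists_eq_add_of_le' hj1
    obtain ⟨d, rfl⟩ := Nat.exists_eq_add_of_le hj2
    rw [Nat.add_right_comm j 1 d]
    exact coeff_fibP_le_coeff_contD (by simp [hb]) fun i _ hi => by simp [hb, hi]
  refine ⟨hcoeff, fun k hk1 hkm => ?_⟩
  calc ((m - 1 - k).choose (k - 1) : ℤ)
      = (m - 2 * k + (k - 1)).choose (k - 1) := by congr 2; omega
    _ = (fibP (m - 2 * k + 2 * (k - 1) + 1)).coeff (m - 2 * k) :=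
        (coeff_fibP_add_two_mul_add_one _ _).symm
    _ = (fibP (m - 1)).coeff (m - 2 * k) := by congr 2; omega
    _ ≤ (contD b m).coeff (m - 2 * k) := hcoeff _
end

section
/- For every m ≥ 0 and all integers b_1,…,b_m, there exists an integer d ≥ 0 such that D_m(b_1,…,b_m) ≡ f_d (mod 2), i.e., every coefficient of the polynomial D_m(b_1,…,b_m) − f_d is even. (Since the Conway polynomial of any two-bridge link is such a continuant, every two-bridge Conway polynomial is congruent modulo 2 to a Fibonacci polynomial.) -/
open Polynomial

/-!
Modulo 2 the Fibonacci polynomial `fₙ` is the rescaled Chebyshev polynomial `Sₙ₋₁`, which makes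
sense for every integer `n`, satisfies the Fibonacci recurrence in both directions, and is unchanged
under `n ↦ -n`. Starting from `(D₋₁, D₀) = (S₋₁, S₀)`, consecutive continuants are `(Sₙ₋ₑ, Sₙ)` for
some sign `e`, so they trace a walk on `ℤ` with unit steps: an odd `bₖ` repeats the previous step,
an even one reverses it.
-/

open Polynomial.Chebyshev

theorem map_intCastRingHom_eq_iff_dvd_coeff_sub (R : Type*) [Ring R] (m : ℕ) [CharP R m]
    (p q : ℤ[X]) :
    p.map (Int.castRingHom R) = q.map (Int.castRingHom R) ↔ ∀ n, (m : ℤ) ∣ (p - q).coeff n := by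
  rw [← sub_eq_zero, ← Polynomial.map_sub, Polynomial.ext_iff]
  simp only [coeff_map, eq_intCast, coeff_zero, CharP.intCast_eq_zero_iff R m]

section CharTwo

variable (R : Type*) [CommRing R] [CharP R 2]

theorem chebyshevS_add_unit (n : ℤ) (e : ℤˣ) : S R (n + e) = X * S R n + S R (n - e) := by
  rcases Int.units_eq_one_or e with rfl | rfl
  · rw [Units.val_one, S_add_one, CharTwo.sub_eq_add]
  · rw [Units.val_neg, Units.val_one, ← sub_eq_add_neg, sub_neg_eq_add, S_sub_one,
      CharTwo.sub_eq_add]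

theorem exists_intCast_mul_chebyshevS_add_eq (b n : ℤ) (e : ℤˣ) :
    ∃ e' : ℤˣ, C (b : R) * X * S R n + S R (n - e) = S R (n + e') := by
  rcases CharTwo.intCast_cases (R := R) b with hb | hb
  · refine ⟨-e, ?_⟩
    rw [hb, C_0, zero_mul, zero_mul, zero_add, Units.val_neg, sub_eq_add_neg]
  · exact ⟨e, by rw [hb, C_1, one_mul, chebyshevS_add_unit]⟩

theorem map_fibP_eq_chebyshevS : ∀ n : ℕ, (fibP n).map (Int.castRingHom R) = S R (n - 1)
  | 0 => by simp [fibP]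
  | 1 => by simp [fibP]
  | n + 2 => by
    have recurrence : S R (n + 1) = X * S R n + S R (n - 1) := chebyshevS_add_unit R n 1
    rw [fibP, Polynomial.map_add, Polynomial.map_mul, map_X, map_fibP_eq_chebyshevS (n + 1),
      map_fibP_eq_chebyshevS n]
    push_cast
    rw [add_sub_cancel_right, ← recurrence]
    congr 1
    ring

theorem map_fibP_natAbs_eq_chebyshevS (n : ℤ) :
    (fibP n.natAbs).map (Int.castRingHom R) = S R (n - 1) := by
  obtain ⟨m, rfl | rfl⟩ := n.eq_nat_or_neg
  · rw [Int.natAbs_natCast, map_fibP_eq_chebyshevS]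
  · rw [Int.natAbs_neg, Int.natAbs_natCast, map_fibP_eq_chebyshevS, S_neg_sub_one, CharTwo.neg_eq]

theorem exists_map_contD_eq_chebyshevS (b : ℕ → ℤ) (k : ℕ) :
    ∃ (n : ℤ) (e : ℤˣ), (contD b k).map (Int.castRingHom R) = S R (n - e) ∧
      (contD b (k + 1)).map (Int.castRingHom R) = S R n := by
  induction k with
  | zero =>
    obtain ⟨e, he⟩ := exists_intCast_mul_chebyshevS_add_eq R (b 1) 0 1
    refine ⟨e, e, ?_, ?_⟩
    · simp [contD]
    · simpa [contD] using he
  | succ k ih =>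
    obtain ⟨n, e, hk, hk_succ⟩ := ih
    obtain ⟨e', he'⟩ := exists_intCast_mul_chebyshevS_add_eq R (b (k + 2)) n e
    refine ⟨n + e', e', ?_, ?_⟩
    · rw [hk_succ, add_sub_cancel_right]
    · simpa [contD, hk, hk_succ] using he'

end CharTwo

/-- Every Euler continuant polynomial (thus, every Conway polynomial of a two-bridge link)
is congruent modulo 2 to some Fibonacci polynomial. -/
theorem contD_congr_fibP_mod_two (m : ℕ) (b : ℕ → ℤ) :
    ∃ d : ℕ, ∀ n, 2 ∣ (contD b m - fibP d).coeff n := by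
  obtain ⟨n, e, hm, -⟩ := exists_map_contD_eq_chebyshevS (ZMod 2) b m
  refine ⟨(n - e + 1).natAbs, (map_intCastRingHom_eq_iff_dvd_coeff_sub (ZMod 2) 2 _ _).mp ?_⟩
  rw [hm, map_fibP_natAbs_eq_chebyshevS, add_sub_cancel_right]
end

section
/- Let m ≥ 1, let b_1,…,b_m be nonzero integers, let z ∈ ℂ be a root of the Euler continuant polynomial D_m(b_1,…,b_m), and let α ∈ ℂ satisfy α² − (z² + 2)α + 1 = 0 (equivalently, α is a root of the associated Alexander polynomial of the two-bridge link). Then −3/2 < Re(α) < 3 + 2√2; moreover, if α is real, then 3 − 2√2 < α < 3 + 2√2. (This gives a partial answer to Hoste's conjecture on roots of Alexander polynomials of alternating knots.) -/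
open Polynomial

/-!
When `‖bᵢ z‖ ≥ 2` for every `i`, the reverse triangle inequality propagates `‖D_{k-1}‖ ≤ ‖D_k‖`
along the recurrence, so `‖D_m‖ ≥ ‖D_0‖ = 1`. A root of `D_m` with nonzero integers `bᵢ` therefore
satisfies `‖z‖ < 2`. Rewriting the relation between `α` and `z` as `(α - 1)² = z² α` confines `α` to
the region `‖α - 1‖² < 4 ‖α‖`, which lies in the annulus `3 - 2√2 < ‖α‖ < 3 + 2√2` and, after
expanding the square, in the half-plane `2 Re α > -3`, because `2 Re α > (‖α‖ - 2)² - 3`. A real `α`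
in this region is positive, since otherwise `(α + 1)² < 0`.
-/

section Continuant

variable {A : Type*}

lemma aeval_contD_add_two [Ring A] (b : ℕ → ℤ) (z : A) (k : ℕ) :
    aeval z (contD b (k + 2)) =
      b (k + 2) * z * aeval z (contD b (k + 1)) + aeval z (contD b k) := by
  simp [contD]

lemma norm_le_norm_mul_add [NonUnitalSeminormedRing A] [NormMulClass A] {c x y : A}
    (hc : 2 ≤ ‖c‖) (hxy : ‖x‖ ≤ ‖y‖) : ‖y‖ ≤ ‖c * y + x‖ :=
  calc
    ‖y‖ = 2 * ‖y‖ - ‖y‖ := by ring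
    _ ≤ ‖c‖ * ‖y‖ - ‖x‖ := by gcongr
    _ = ‖c * y‖ - ‖x‖ := by rw [norm_mul]
    _ ≤ ‖c * y + x‖ := norm_sub_le_norm_add _ _

variable [SeminormedRing A] [NormMulClass A] [NormOneClass A] {b : ℕ → ℤ} {z : A}

lemma norm_aeval_contD_le_succ {k : ℕ} (hbz : ∀ i, 1 ≤ i → i ≤ k + 1 → 2 ≤ ‖(b i : A) * z‖) :
    ‖aeval z (contD b k)‖ ≤ ‖aeval z (contD b (k + 1))‖ := by
  induction k with
  | zero =>
    have hb₁ : 2 ≤ ‖(b 1 : A) * z‖ := hbz 1 le_rfl le_rfl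
    simpa [contD, -norm_mul] using one_le_two.trans hb₁
  | succ k ih =>
    rw [aeval_contD_add_two]
    exact norm_le_norm_mul_add (hbz (k + 2) (by lia) le_rfl)
      (ih fun i hi hik ↦ hbz i hi (by lia))

lemma one_le_norm_aeval_contD {m : ℕ} (hbz : ∀ i, 1 ≤ i → i ≤ m → 2 ≤ ‖(b i : A) * z‖) :
    1 ≤ ‖aeval z (contD b m)‖ := by
  induction m with
  | zero => simp [contD]
  | succ m ih =>
    exact (ih fun i hi him ↦ hbz i hi (by lia)).trans (norm_aeval_contD_le_succ hbz)

lemma norm_lt_two_of_aeval_contD_eq_zero [NormSMulClass ℤ A] {m : ℕ}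
    (hb : ∀ i, 1 ≤ i → i ≤ m → b i ≠ 0) (hz : aeval z (contD b m) = 0) : ‖z‖ < 2 := by
  by_contra! hz₂
  have hbz (i : ℕ) (hi : 1 ≤ i) (him : i ≤ m) : 2 ≤ ‖(b i : A) * z‖ := by
    have hbi : (1 : ℝ) ≤ |(b i : ℝ)| := mod_cast Int.one_le_abs (hb i hi him)
    calc
      2 ≤ ‖z‖ := hz₂
      _ ≤ |(b i : ℝ)| * ‖z‖ := le_mul_of_one_le_left (norm_nonneg z) hbi
      _ = ‖(b i : A) * z‖ := by simp [norm_intCast_eq_abs_mul_norm_one]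
  have hone : 1 ≤ ‖aeval z (contD b m)‖ := one_le_norm_aeval_contD hbz
  rw [hz, norm_zero] at hone
  exact one_pos.not_ge hone

end Continuant

section RootRegion

lemma norm_sub_one_sq_eq_norm_sq_mul_norm {K : Type*} [SeminormedCommRing K] [NormMulClass K]
    [NormOneClass K] {α z : K} (hα : α ^ 2 - (z ^ 2 + 2) * α + 1 = 0) :
    ‖α - 1‖ ^ 2 = ‖z‖ ^ 2 * ‖α‖ := by
  have hsq : (α - 1) ^ 2 = z ^ 2 * α := by linear_combination hα
  rw [← norm_pow, hsq, norm_mul, norm_pow]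

lemma norm_sub_one_sq_lt_four_mul_norm {K : Type*} [NormedField K] {α z : K}
    (hα : α ^ 2 - (z ^ 2 + 2) * α + 1 = 0) (hz : ‖z‖ < 2) : ‖α - 1‖ ^ 2 < 4 * ‖α‖ := by
  have hα₀ : α ≠ 0 := by
    rintro rfl
    simp at hα
  have hz_sq : ‖z‖ ^ 2 < 4 := by
    calc
      ‖z‖ ^ 2 < 2 ^ 2 := by gcongr
      _ = 4 := by norm_num
  rw [norm_sub_one_sq_eq_norm_sq_mul_norm hα]
  exact mul_lt_mul_of_pos_right hz_sq (norm_pos_iff.mpr hα₀)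

lemma norm_mem_Ioo_of_norm_sub_one_sq_lt {R : Type*} [SeminormedRing R] [NormOneClass R] {a : R}
    (ha : ‖a - 1‖ ^ 2 < 4 * ‖a‖) : ‖a‖ ∈ Set.Ioo (3 - 2 * √2) (3 + 2 * √2) := by
  have hrev : (‖a‖ - 1) ^ 2 ≤ ‖a - 1‖ ^ 2 := by
    simpa using sq_le_sq.mpr ((abs_norm_sub_norm_le a 1).trans (le_abs_self _))
  have hsq : (‖a‖ - 3) ^ 2 < (2 * √2) ^ 2 := by
    rw [mul_pow, Real.sq_sqrt zero_le_two]
    linarith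
  have habs : |‖a‖ - 3| < 2 * √2 := abs_lt_of_sq_lt_sq hsq (by positivity)
  constructor <;> linarith [abs_lt.mp habs]

lemma norm_sub_one_sq_eq_norm_sq_sub_re (α : ℂ) : ‖α - 1‖ ^ 2 = ‖α‖ ^ 2 - 2 * α.re + 1 := by
  simp only [Complex.sq_norm, Complex.normSq_sub, map_one, mul_one]
  ring

lemma neg_three_halves_lt_re_of_norm_sub_one_sq_lt {α : ℂ} (hα : ‖α - 1‖ ^ 2 < 4 * ‖α‖) :
    -3 / 2 < α.re := by
  rw [norm_sub_one_sq_eq_norm_sq_sub_re] at hα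
  linarith [sq_nonneg (‖α‖ - 2)]

lemma pos_of_sub_one_sq_lt_four_mul_abs {R : Type*} [CommRing R] [LinearOrder R]
    [IsStrictOrderedRing R] {a : R} (ha : (a - 1) ^ 2 < 4 * |a|) : 0 < a := by
  by_contra! ha₀
  rw [abs_of_nonpos ha₀] at ha
  linarith [sq_nonneg (a + 1)]

lemma re_eq_norm_of_norm_sub_one_sq_lt {α : ℂ} (hα : ‖α - 1‖ ^ 2 < 4 * ‖α‖) (him : α.im = 0) :
    α.re = ‖α‖ := by
  have hre : |α.re| = ‖α‖ := Complex.abs_re_eq_norm.mpr him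
  have hpos : 0 < α.re := by
    apply pos_of_sub_one_sq_lt_four_mul_abs
    calc
      (α.re - 1) ^ 2 = |α.re| ^ 2 - 2 * α.re + 1 := by rw [sq_abs]; ring
      _ = ‖α - 1‖ ^ 2 := by rw [hre, norm_sub_one_sq_eq_norm_sq_sub_re]
      _ < 4 * |α.re| := by rwa [hre]
  rw [← hre, abs_of_pos hpos]

end RootRegion

/-- Bounds for the roots of Alexander polynomials of two-bridge links: if `z` is a root of
the Euler continuant polynomial `D_m(b₁,…,b_m)` (with `b_i ≠ 0`) and `α` satisfies
`α² - (z² + 2)α + 1 = 0`, then `-3/2 < Re α < 3 + 2√2`; if moreover `α` is real, then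
`3 - 2√2 < α < 3 + 2√2`. -/
theorem alexander_root_bounds (m : ℕ) (hm : 1 ≤ m) (b : ℕ → ℤ)
    (hb : ∀ i, 1 ≤ i → i ≤ m → b i ≠ 0)
    (z : ℂ) (hz : Polynomial.aeval z (contD b m) = 0)
    (α : ℂ) (hα : α ^ 2 - (z ^ 2 + 2) * α + 1 = 0) :
    (-3 / 2 < α.re ∧ α.re < 3 + 2 * Real.sqrt 2) ∧
    (α.im = 0 → 3 - 2 * Real.sqrt 2 < α.re ∧ α.re < 3 + 2 * Real.sqrt 2) := by
  have hregion : ‖α - 1‖ ^ 2 < 4 * ‖α‖ :=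
    norm_sub_one_sq_lt_four_mul_norm hα (norm_lt_two_of_aeval_contD_eq_zero hb hz)
  have hannulus : ‖α‖ ∈ Set.Ioo (3 - 2 * √2) (3 + 2 * √2) :=
    norm_mem_Ioo_of_norm_sub_one_sq_lt hregion
  have hre_upper : α.re < 3 + 2 * √2 := (Complex.re_le_norm α).trans_lt hannulus.2
  refine ⟨⟨neg_three_halves_lt_re_of_norm_sub_one_sq_lt hregion, hre_upper⟩, fun him ↦ ?_⟩
  rw [re_eq_norm_of_norm_sub_one_sq_lt hregion him]
  exact hannulus
end
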